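/- arXiv:math/0209096 — 3 statements merged into one kernel-verified Lean document; each statement's English description precedes it below -/
import Mathlib

section
/- Let f : ℝⁿ → ℝⁿ be analytic with f(ζ) = 0 and Df(ζ) invertible. If ‖z - ζ‖ ≤ (3 - √7)/(2·γ(f,ζ)), then the Newton sequence z₀ = z, z_{k+1} = z_k - Df(z_k)⁻¹ f(z_k) is defined for all k and satisfies ‖z_k - ζ‖ ≤ (1/2)^(2^k - 1)·‖z - ζ‖. -/
/-!
Write `A = Df(ζ)⁻¹`, `g = A ∘ f`, `γ = γ(f,ζ)`, `h = w - ζ` and `u = γ‖h‖`. By definition of `γ` the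
Taylor coefficients of `g` at `ζ` satisfy `‖p_k‖ ≤ γ^(k-1)` for `k ≥ 2` (`norm_taylorFMS_le`), so the
Taylor series converges on the ball of radius `1/γ`, where it represents `g`
(`hasFPowerSeriesOnBall_taylorFMS`). Summing term by term, for `u < 1`,

* `‖Dg(w) - 1‖ ≤ ∑_{k ≥ 1} (k+1) u^k = 1/(1-u)² - 1` (`norm_fderiv_sub_one_le`),
* `‖Dg(w) h - g(w)‖ ≤ ‖h‖ ∑ k u^k = ‖h‖ u/(1-u)²` (`norm_fderiv_apply_sub_le`).

The Newton step `v = N_f(w) - ζ` solves `Dg(w) v = Dg(w) h - g(w)`, because Newton's method does not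
see the composition with `A`. When `1/(1-u)² - 1 < 1` the operator `Dg(w)` is invertible, and the two
bounds give `ψ(u) ‖v‖ ≤ u ‖h‖`. The constant `u₀ = (3 - √7)/2` is the smaller root of `ψ(u) = 2u`, hence
`2u₀ ‖v‖ ≤ γ ‖h‖²` whenever `u ≤ u₀` (`newton_step`). Iterating this from `γ‖z - ζ‖ ≤ u₀` gives the
exponents `2^k - 1`.
-/

noncomputable section

open Metric Filter

/-- The inverse of the derivative of `f` at `x` (zero if not invertible). -/
def dfInv {n : ℕ} (f : EuclideanSpace ℝ (Fin n) → EuclideanSpace ℝ (Fin n))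
    (x : EuclideanSpace ℝ (Fin n)) :
    EuclideanSpace ℝ (Fin n) →L[ℝ] EuclideanSpace ℝ (Fin n) :=
  Ring.inverse (fderiv ℝ f x)

/-- The term `‖Df(x)⁻¹ D^k f(x) / k!‖^(1/(k-1))` of Smale's gamma invariant. -/
def smaleTerm {n : ℕ} (f : EuclideanSpace ℝ (Fin n) → EuclideanSpace ℝ (Fin n))
    (x : EuclideanSpace ℝ (Fin n)) (k : ℕ) : ℝ :=
  (‖(dfInv f x).compContinuousMultilinearMap (iteratedFDeriv ℝ k f x)‖ /
      (Nat.factorial k : ℝ)) ^ ((1 : ℝ) / ((k : ℝ) - 1))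

/-- Smale's gamma invariant `γ(f,x) = sup_{k ≥ 2} ‖Df(x)⁻¹ D^k f(x)/k!‖^(1/(k-1))`. -/
def smaleGamma {n : ℕ} (f : EuclideanSpace ℝ (Fin n) → EuclideanSpace ℝ (Fin n))
    (x : EuclideanSpace ℝ (Fin n)) : ℝ :=
  ⨆ k : ℕ, smaleTerm f x (k + 2)

/-- Smale's beta invariant `β(f,x) = ‖Df(x)⁻¹ f(x)‖`, the Newton step length. -/
def smaleBeta {n : ℕ} (f : EuclideanSpace ℝ (Fin n) → EuclideanSpace ℝ (Fin n))
    (x : EuclideanSpace ℝ (Fin n)) : ℝ :=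
  ‖dfInv f x (f x)‖

/-- The Newton operator `N_f(x) = x - Df(x)⁻¹ f(x)`. -/
def newton {n : ℕ} (f : EuclideanSpace ℝ (Fin n) → EuclideanSpace ℝ (Fin n))
    (x : EuclideanSpace ℝ (Fin n)) : EuclideanSpace ℝ (Fin n) :=
  x - dfInv f x (f x)

/-- `ψ(u) = 1 - 4u + 2u²`. -/
def psi (u : ℝ) : ℝ := 1 - 4 * u + 2 * u ^ 2

/-- The Taylor series of `g` at `x`, with `k`-th coefficient `D^k g(x) / k!`. -/
def taylorFMS {E F : Type*} [NormedAddCommGroup E] [NormedSpace ℝ E] [NormedAddCommGroup F]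
    [NormedSpace ℝ F] (g : E → F) (x : E) : FormalMultilinearSeries ℝ E F :=
  fun k => ((Nat.factorial k : ℝ))⁻¹ • iteratedFDeriv ℝ k g x

/-- A function that is real analytic everywhere need not have an everywhere convergent
Taylor series; but it agrees with its Taylor series on the whole ball where the coefficient bound
forces convergence, by the identity principle on that (connected) ball. -/
lemma hasFPowerSeriesOnBall_taylorFMS {E F : Type*} [NormedAddCommGroup E] [NormedSpace ℝ E]
    [NormedAddCommGroup F] [NormedSpace ℝ F] [CompleteSpace F] {g : E → F}
    (hg : ∀ w, AnalyticAt ℝ g w) {x : E} {γ : ℝ} (hγ : 0 < γ)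
    (hp : ∀ k, ‖taylorFMS g x (k + 2)‖ ≤ γ ^ (k + 1)) :
    HasFPowerSeriesOnBall g (taylorFMS g x) x (ENNReal.ofReal γ⁻¹) := by
  set p := taylorFMS g x with hpdef
  have hr0 : 0 < ENNReal.ofReal γ⁻¹ := by simpa using hγ
  have hrad : ENNReal.ofReal γ⁻¹ ≤ p.radius := by
    refine p.le_radius_of_eventually_le γ⁻¹ ?_
    filter_upwards [eventually_ge_atTop 2] with n hn
    obtain ⟨k, rfl⟩ := Nat.exists_eq_add_of_le' hn
    rw [Real.coe_toNNReal _ (inv_nonneg.2 hγ.le)]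
    calc ‖p (k + 2)‖ * γ⁻¹ ^ (k + 2) ≤ γ ^ (k + 1) * γ⁻¹ ^ (k + 2) := by
          gcongr
          exact hp k
      _ = γ⁻¹ := by
          rw [pow_succ γ⁻¹ (k + 1), ← mul_assoc, ← mul_pow, mul_inv_cancel₀ hγ.ne', one_pow,
            one_mul]
  have hsum : HasFPowerSeriesOnBall (fun y => p.sum (y - x)) p x (ENNReal.ofReal γ⁻¹) := by
    have := (p.hasFPowerSeriesOnBall (hr0.trans_le hrad)).comp_sub x
    simp only [zero_add] at this
    exact this.mono hr0 hrad
  refine hsum.congr (Set.EqOn.symm ?_)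
  refine AnalyticOnNhd.eqOn_of_preconnected_of_eventuallyEq (fun w _ => hg w) hsum.analyticOnNhd
    (Metric.isConnected_eball hr0).isPreconnected (z₀ := x) (by simpa using hγ) ?_
  -- Near `x`, `g` is the sum of some power series, whose diagonal values are those of `p`.
  obtain ⟨q, r, hq⟩ := hg x
  filter_upwards [Metric.eball_mem_nhds x hq.r_pos] with y hy
  have hy' : y - x ∈ Metric.eball (0 : E) r := by
    simpa [edist_eq_enorm_sub] using hy
  have h1 := hq.hasSum_iteratedFDeriv hy'
  rw [add_sub_cancel] at h1
  exact h1.tsum_eq.symm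

/-- The `k`-th coefficient of the derivative series is a sum of `k + 1` rearrangements of
`p (k + 1)`, each of the same norm. -/
lemma norm_derivSeries_le {E F : Type*} [NormedAddCommGroup E] [NormedSpace ℝ E]
    [NormedAddCommGroup F] [NormedSpace ℝ F] (p : FormalMultilinearSeries ℝ E F) (k : ℕ) :
    ‖p.derivSeries k‖ ≤ (k + 1) * ‖p (k + 1)‖ := by
  have h1 : ‖p.derivSeries k‖ ≤ ‖p.changeOriginSeries 1 k‖ := by
    apply (ContinuousLinearMap.norm_compContinuousMultilinearMap_le _ _).trans
    apply mul_le_of_le_one_left (norm_nonneg _)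
    exact ContinuousLinearMap.opNorm_le_bound _ zero_le_one (by simp)
  refine h1.trans ?_
  have h2 : ‖p.changeOriginSeries 1 k‖₊ ≤ (k + 1) * ‖p (k + 1)‖₊ := by
    refine (p.nnnorm_changeOriginSeries_le_tsum 1 k).trans_eq ?_
    rw [tsum_fintype, Finset.sum_const, Finset.card_univ, nsmul_eq_mul,
      Fintype.card_finset_len, Fintype.card_fin, add_comm 1 k, Nat.choose_succ_self_right]
    push_cast
    rfl
  exact_mod_cast h2

lemma mem_eball_ofReal_inv {E : Type*} [NormedAddCommGroup E] {h : E} {γ : ℝ} (hγ : 0 < γ)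
    (hh : γ * ‖h‖ < 1) : h ∈ Metric.eball (0 : E) (ENNReal.ofReal γ⁻¹) := by
  rw [Metric.mem_eball, edist_zero_right, ← ofReal_norm,
    ENNReal.ofReal_lt_ofReal_iff (inv_pos.2 hγ), inv_eq_one_div, lt_div_iff₀' hγ]
  exact hh

/-- The constant term of the series of `Dg` is `Dg(x) = 1`; the remaining terms are compared with
`∑_{k ≥ 1} (k+1) u^k`, where `u = γ‖h‖`. -/
lemma norm_fderiv_sub_one_le {E : Type*} [NormedAddCommGroup E] [NormedSpace ℝ E]
    [CompleteSpace E] {g : E → E} {p : FormalMultilinearSeries ℝ E E} {x h : E} {γ : ℝ}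
    (hγ : 0 < γ) (hg : HasFPowerSeriesOnBall g p x (ENNReal.ofReal γ⁻¹))
    (hp : ∀ k, ‖p (k + 2)‖ ≤ γ ^ (k + 1)) (h1 : fderiv ℝ g x = 1) (hh : γ * ‖h‖ < 1) :
    ‖fderiv ℝ g (x + h) - 1‖ ≤ 1 / (1 - γ * ‖h‖) ^ 2 - 1 := by
  have hmem := mem_eball_ofReal_inv hγ hh
  have hs := (hasSum_nat_add_iff' 1).2 (hg.fderiv.hasSum hmem)
  have h0 : (p.derivSeries 0 fun _ => h) = 1 := by
    rw [← h1]; exact hg.fderiv.coeff_zero _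
  simp only [Finset.range_one, Finset.sum_singleton, h0] at hs
  have hu : ‖γ * ‖h‖‖ < 1 := by rwa [Real.norm_of_nonneg (by positivity)]
  have hb0 : HasSum (fun k : ℕ => ((k : ℝ) + 1) * (γ * ‖h‖) ^ k) (1 / (1 - γ * ‖h‖) ^ 2) := by
    have := hasSum_choose_mul_geometric_of_norm_lt_one (𝕜 := ℝ) 1 hu
    simpa only [Nat.choose_one_right, Nat.cast_add, Nat.cast_one] using this
  have hb := (hasSum_nat_add_iff' 1).2 hb0
  simp only [Finset.range_one, Finset.sum_singleton, Nat.cast_zero, zero_add, pow_zero,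
    mul_one] at hb
  rw [← hs.tsum_eq]
  refine tsum_of_norm_bounded hb fun k => ?_
  calc ‖p.derivSeries (k + 1) fun _ => h‖ ≤ ‖p.derivSeries (k + 1)‖ * ‖h‖ ^ (k + 1) := by
        simpa using (p.derivSeries (k + 1)).le_opNorm fun _ => h
    _ ≤ (((k + 1 : ℕ) + 1) * γ ^ (k + 1)) * ‖h‖ ^ (k + 1) := by
        gcongr
        exact (norm_derivSeries_le p (k + 1)).trans (by gcongr; exact hp k)
    _ = _ := by push_cast; ring

/-- The Newton residual at `x + h`: its `k`-th order part is `(k - 1)` times that of `g`, so the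
linear part cancels and the remainder is quadratic in `h`. -/
lemma norm_fderiv_apply_sub_le {E : Type*} [NormedAddCommGroup E] [NormedSpace ℝ E]
    [CompleteSpace E] {g : E → E} {p : FormalMultilinearSeries ℝ E E} {x h : E} {γ : ℝ}
    (hγ : 0 < γ) (hg : HasFPowerSeriesOnBall g p x (ENNReal.ofReal γ⁻¹))
    (hp : ∀ k, ‖p (k + 2)‖ ≤ γ ^ (k + 1)) (h0 : g x = 0) (hh : γ * ‖h‖ < 1) :
    ‖fderiv ℝ g (x + h) h - g (x + h)‖ ≤ γ * ‖h‖ / (1 - γ * ‖h‖) ^ 2 * ‖h‖ := by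
  have hmem := mem_eball_ofReal_inv hγ hh
  have hs1 := (hg.fderiv.hasSum hmem).mapL (ContinuousLinearMap.apply ℝ E h)
  have hs2 := (hasSum_nat_add_iff' 1).2 (hg.hasSum hmem)
  have hp0 : (p 0 fun _ => h) = 0 := by rw [← h0]; exact hg.coeff_zero _
  simp only [Finset.range_one, Finset.sum_singleton, hp0, sub_zero] at hs2
  have hs := hs1.sub hs2
  simp only [ContinuousLinearMap.apply_apply, FormalMultilinearSeries.derivSeries_apply_diag] at hs
  have hu : ‖γ * ‖h‖‖ < 1 := by rwa [Real.norm_of_nonneg (by positivity)]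
  have hb := (hasSum_coe_mul_geometric_of_norm_lt_one hu).mul_right ‖h‖
  rw [← hs.tsum_eq]
  refine tsum_of_norm_bounded hb fun k => ?_
  -- On the diagonal the two series have `k`-th terms `(k+1) p_{k+1}` and `p_{k+1}`.
  rw [add_smul, one_smul, add_sub_cancel_right]
  rcases k with _ | k
  · simp
  · calc ‖(k + 1) • p (k + 1 + 1) fun _ => h‖
        = (k + 1 : ℕ) * ‖p (k + 2) fun _ => h‖ := by rw [← Nat.cast_smul_eq_nsmul ℝ, norm_smul, Real.norm_natCast]
      _ ≤ (k + 1 : ℕ) * (γ ^ (k + 1) * ‖h‖ ^ (k + 2)) := by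
        gcongr
        refine ((p (k + 2)).le_opNorm fun _ => h).trans ?_
        simp only [Finset.prod_const, Finset.card_univ, Fintype.card_fin]
        gcongr
        exact hp k
      _ = _ := by ring

lemma isUnit_of_norm_sub_one_lt {R : Type*} [NormedRing R] [CompleteSpace R] {a : R}
    (ha : ‖a - 1‖ < 1) : IsUnit a := by
  have := (Units.oneSub (1 - a) (by rwa [norm_sub_rev])).isUnit
  simpa using this

/-- The definition of `γ(f,ζ)` unwound: taking the `(k+1)`-th power of the `k`-th term of the supremum
bounds the Taylor coefficients of `Df(ζ)⁻¹ ∘ f`. -/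
lemma norm_taylorFMS_le {n : ℕ}
    (f : EuclideanSpace ℝ (Fin n) → EuclideanSpace ℝ (Fin n))
    (hf : ∀ w, AnalyticAt ℝ f w) (ζ : EuclideanSpace ℝ (Fin n))
    (hfin : BddAbove (Set.range fun k : ℕ => smaleTerm f ζ (k + 2))) (k : ℕ) :
    ‖taylorFMS (dfInv f ζ ∘ f) ζ (k + 2)‖ ≤ smaleGamma f ζ ^ (k + 1) := by
  have hle : smaleTerm f ζ (k + 2) ≤ smaleGamma f ζ := le_ciSup hfin k
  have h1 : iteratedFDeriv ℝ (k + 2) (dfInv f ζ ∘ f) ζ =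
      (dfInv f ζ).compContinuousMultilinearMap (iteratedFDeriv ℝ (k + 2) f ζ) :=
    (dfInv f ζ).iteratedFDeriv_comp_left (hf ζ).contDiffAt le_rfl
  set a : ℝ := ‖(dfInv f ζ).compContinuousMultilinearMap (iteratedFDeriv ℝ (k + 2) f ζ)‖ /
      (Nat.factorial (k + 2) : ℝ) with ha
  have ha0 : 0 ≤ a := by positivity
  have h2 : ‖taylorFMS (dfInv f ζ ∘ f) ζ (k + 2)‖ = a := by
    rw [taylorFMS, h1, norm_smul, ha, div_eq_inv_mul]
    simp
  have h3 : smaleTerm f ζ (k + 2) = a ^ (((k + 1 : ℕ) : ℝ)⁻¹) := by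
    rw [smaleTerm, ← ha]
    congr 1
    push_cast
    rw [one_div]
    congr 1
    ring
  rw [h2, ← Real.rpow_inv_natCast_pow ha0 (Nat.succ_ne_zero k), ← h3]
  exact pow_le_pow_left₀ (h3 ▸ by positivity) hle _

/-- One Newton step from a point `w` with `γ‖w - ζ‖ ≤ u₀ = (3 - √7)/2` is defined, and it satisfies
`2u₀ ‖N_f(w) - ζ‖ ≤ γ ‖w - ζ‖²`. -/
lemma newton_step {n : ℕ}
    (f : EuclideanSpace ℝ (Fin n) → EuclideanSpace ℝ (Fin n))
    (hf : ∀ w, AnalyticAt ℝ f w) (ζ w : EuclideanSpace ℝ (Fin n)) (hζ : f ζ = 0)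
    (hinv : IsUnit (fderiv ℝ f ζ))
    (hfin : BddAbove (Set.range fun k : ℕ => smaleTerm f ζ (k + 2)))
    (hγ : 0 < smaleGamma f ζ)
    (hw : smaleGamma f ζ * ‖w - ζ‖ ≤ (3 - Real.sqrt 7) / 2) :
    IsUnit (fderiv ℝ f w) ∧
      (3 - Real.sqrt 7) * ‖newton f w - ζ‖ ≤ smaleGamma f ζ * ‖w - ζ‖ * ‖w - ζ‖ := by
  set γ := smaleGamma f ζ
  set A := dfInv f ζ with hA
  have hAu : IsUnit A := isUnit_ringInverse.2 hinv
  have hAF : A * fderiv ℝ f ζ = 1 := Ring.inverse_mul_cancel _ hinv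
  have hgan : ∀ y, AnalyticAt ℝ (A ∘ f) y := fun y => (A.analyticAt _).comp (hf y)
  have hgd : ∀ y, fderiv ℝ (A ∘ f) y = A * fderiv ℝ f y := fun y =>
    (A.hasFDerivAt.comp y (hf y).differentiableAt.hasFDerivAt).fderiv
  have hp := norm_taylorFMS_le f hf ζ hfin
  have hg := hasFPowerSeriesOnBall_taylorFMS hgan hγ hp
  obtain ⟨h, rfl⟩ : ∃ h, w = ζ + h := ⟨w - ζ, by simp⟩
  rw [add_sub_cancel_left] at hw ⊢
  have h7 : Real.sqrt 7 ^ 2 = 7 := Real.sq_sqrt (by norm_num)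
  have h7a : 2.6 < Real.sqrt 7 := Real.lt_sqrt_of_sq_lt (by norm_num)
  set u := γ * ‖h‖ with hu
  have hu0 : 0 ≤ u := by positivity
  have hu1 : u < 0.2 := by linarith
  have hB1 := norm_fderiv_sub_one_le hγ hg hp (by rw [hgd, hAF]) (by linarith : γ * ‖h‖ < 1)
  have hB2 := norm_fderiv_apply_sub_le hγ hg hp (by simp [hζ]) (by linarith : γ * ‖h‖ < 1)
  rw [← hu] at hB1 hB2
  rw [hgd] at hB1 hB2
  have hpos : 0 < (1 - u) ^ 2 := by nlinarith
  have hc : 1 / (1 - u) ^ 2 - 1 < 1 := by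
    rw [sub_lt_iff_lt_add, div_lt_iff₀ hpos]; nlinarith
  have hTu := isUnit_of_norm_sub_one_lt (hB1.trans_lt hc)
  have hFu : IsUnit (fderiv ℝ f (ζ + h)) := by
    rwa [hAu.mul_left_iff] at hTu
  refine ⟨hFu, ?_⟩
  set F := fderiv ℝ f (ζ + h)
  set v := newton f (ζ + h) - ζ with hv
  have hFv : F v = F h - f (ζ + h) := by
    have hv' : v = h - dfInv f (ζ + h) (f (ζ + h)) := by
      rw [hv, newton]; abel
    rw [hv', map_sub]
    congr 1
    exact congrArg (fun L => L (f (ζ + h))) (Ring.mul_inverse_cancel F hFu)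
  have hTv : (A * F) v = (A * F) h - (A ∘ f) (ζ + h) := by
    simp only [mul_apply_eq_comp, hFv, map_sub, Function.comp_apply]
  rw [← hTv] at hB2
  have hlow : ‖v‖ ≤ ‖(A * F) v‖ + (1 / (1 - u) ^ 2 - 1) * ‖v‖ := by
    have e : v = (A * F) v - (A * F - 1) v := by simp
    calc ‖v‖ = ‖(A * F) v - (A * F - 1) v‖ := by rw [← e]
      _ ≤ ‖(A * F) v‖ + ‖(A * F - 1) v‖ := norm_sub_le _ _
      _ ≤ _ := by
        gcongr
        exact (A * F - 1).le_of_opNorm_le hB1 v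
  have hpsi : psi u * ‖v‖ ≤ u * ‖h‖ := by
    have := mul_le_mul_of_nonneg_right (hlow.trans (add_le_add_left hB2 _)) hpos.le
    have e : (u / (1 - u) ^ 2 * ‖h‖ + (1 / (1 - u) ^ 2 - 1) * ‖v‖) * (1 - u) ^ 2
        = u * ‖h‖ + (1 - (1 - u) ^ 2) * ‖v‖ := by
      have hne : 1 - u ≠ 0 := by linarith
      field_simp
    rw [e] at this
    rw [psi]
    nlinarith
  -- `u₀ = (3 - √7) / 2` satisfies `ψ(u₀) = 2 u₀`, and `ψ` decreases on `[0, u₀]`.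
  have hmono : 3 - Real.sqrt 7 ≤ psi u := by
    rw [psi]; nlinarith
  exact (mul_le_mul_of_nonneg_right hmono (norm_nonneg _)).trans hpsi

/-- Smale's γ-theorem in `ℝⁿ`: if `f(ζ) = 0`, `Df(ζ)` is invertible and
`‖z - ζ‖ ≤ (3-√7)/(2γ(f,ζ))`, then the Newton sequence starting at `z`
is defined for all `k` and converges quadratically: 
`‖z_k - ζ‖ ≤ (1/2)^(2^k-1) ‖z - ζ‖`. -/
theorem smale_gamma_theorem {n : ℕ}
    (f : EuclideanSpace ℝ (Fin n) → EuclideanSpace ℝ (Fin n))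
    (hf : ∀ w, AnalyticAt ℝ f w)
    (ζ z : EuclideanSpace ℝ (Fin n))
    (hζ : f ζ = 0)
    (hinv : IsUnit (fderiv ℝ f ζ))
    (hfin : BddAbove (Set.range fun k : ℕ => smaleTerm f ζ (k + 2)))
    (hz : ‖z - ζ‖ ≤ (3 - Real.sqrt 7) / (2 * smaleGamma f ζ)) :
    ∀ k : ℕ,
      IsUnit (fderiv ℝ f ((newton f)^[k] z)) ∧
      ‖(newton f)^[k] z - ζ‖ ≤ ((1 : ℝ) / 2) ^ (2 ^ k - 1) * ‖z - ζ‖ := by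
  have h7a : 2.6 < Real.sqrt 7 := Real.lt_sqrt_of_sq_lt (by norm_num)
  have h7b : Real.sqrt 7 < 3 := (Real.sqrt_lt' (by norm_num)).2 (by norm_num)
  have hγ0 : 0 ≤ smaleGamma f ζ :=
    Real.iSup_nonneg fun k => by unfold smaleTerm; positivity
  rcases hγ0.eq_or_lt with hγ | hγ
  ·
    -- For `γ = 0` the radius is `0` by the convention `x / 0 = 0`, so `z = ζ` is a fixed point.
    rw [← hγ, mul_zero, div_zero, norm_le_zero_iff, sub_eq_zero] at hz
    subst hz
    have hfix : newton f z = z := by simp [newton, hζ]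
    intro k
    rw [Function.iterate_fixed hfix]
    exact ⟨hinv, by simp⟩
  set γ := smaleGamma f ζ with hγdef
  set d := ‖z - ζ‖ with hd
  have hd0 : 0 ≤ d := norm_nonneg _
  have hzd : γ * d ≤ (3 - Real.sqrt 7) / 2 := by
    rw [le_div_iff₀ (by positivity)] at hz
    linarith
  have key : ∀ k : ℕ, ‖(newton f)^[k] z - ζ‖ ≤ ((1 : ℝ) / 2) ^ (2 ^ k - 1) * d →
      IsUnit (fderiv ℝ f ((newton f)^[k] z)) ∧
      (3 - Real.sqrt 7) * ‖newton f ((newton f)^[k] z) - ζ‖ ≤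
        γ * ‖(newton f)^[k] z - ζ‖ * ‖(newton f)^[k] z - ζ‖ := by
    intro k hk
    refine newton_step f hf ζ _ hζ hinv hfin hγ (le_trans ?_ hzd)
    have : ‖(newton f)^[k] z - ζ‖ ≤ d :=
      hk.trans (mul_le_of_le_one_left hd0 (pow_le_one₀ (by norm_num) (by norm_num)))
    gcongr
  have main : ∀ k : ℕ, ‖(newton f)^[k] z - ζ‖ ≤ ((1 : ℝ) / 2) ^ (2 ^ k - 1) * d := by
    intro k
    induction k with
    | zero => simp [hd]
    | succ k ih =>
      have h1 := (key k ih).2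
      rw [Function.iterate_succ_apply']
      set t : ℝ := ((1 : ℝ) / 2) ^ (2 ^ k - 1) with ht
      have ht0 : 0 ≤ t := by positivity
      have ht2 : ((1 : ℝ) / 2) ^ (2 ^ (k + 1) - 1) = t * t * (1 / 2) := by
        rw [ht, ← pow_add, ← pow_succ]
        congr 1
        have := Nat.one_le_two_pow (n := k)
        omega
      rw [ht2]
      have h2 : γ * ‖(newton f)^[k] z - ζ‖ * ‖(newton f)^[k] z - ζ‖ ≤ γ * (t * d) * (t * d) := by
        gcongr
      have h3 : γ * (t * d) * (t * d) ≤ (3 - Real.sqrt 7) * (t * t * (1 / 2) * d) := by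
        calc γ * (t * d) * (t * d) = (γ * d) * (t * t * d) := by ring
          _ ≤ (3 - Real.sqrt 7) / 2 * (t * t * d) := by gcongr
          _ = _ := by ring
      exact le_of_mul_le_mul_left (h1.trans (h2.trans h3)) (by linarith)
  exact fun k => ⟨(key k (main k)).1, main k⟩
end
end

section
/- Let f : ℝⁿ → ℝⁿ be analytic, z with Df(z) invertible, z₁ = N_f(z) = z - Df(z)⁻¹f(z), and ν = ‖z - z₁‖·γ(f,z) < 1 - √2/2. Then β(f,z₁) ≤ ((1-ν)/ψ(ν))·β(f,z)²·γ(f,z) and α(f,z₁) ≤ α(f,z)²/ψ(ν)², where β(f,x) = ‖Df(x)⁻¹ f(x)‖, α = β·γ, and ψ(ν) = 1 - 4ν + 2ν². -/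
/-!
Write `A = Df(z)⁻¹`, `β = β(f,z) = ‖z₁ - z‖`, `γ = γ(f,z)`, `ν = βγ`, and let
`F w = A (f w) - (A (f z) + (w - z))` be the remainder of `A ∘ f` after its linearization at `z`.
Its Taylor coefficients at `z` vanish in degrees `0` and `1` and have norm at most `γ ^ (k - 1)` in
degree `k ≥ 2`, so `F` is majorized by `t ↦ ∑_{k ≥ 2} γ ^ (k - 1) t ^ k`. The Taylor series
represents `F` on its ball of convergence (`hasFPowerSeriesOnBall_taylor`), which contains `z₁`, and
re-expanding it there bounds all derivatives of `F` at `z₁` by those of the majorant at `β`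
(`norm_iteratedFDeriv_shift_le`). The definition of the Newton step gives `F z₁ = A (f z₁)`, while
`DF(z₁) = A Df(z₁) - 1` and `DᵏF(z₁) = A Dᵏf(z₁)` for `k ≥ 2`. Hence

* `‖A (f z₁)‖ ≤ β ν / (1 - ν)`;
* `‖A Df(z₁) - 1‖ ≤ 1 / (1 - ν)² - 1 < 1`, so by Banach's lemma (`isUnit_and_norm_inverse_le`)
  `Df(z₁)` is invertible and `‖Df(z₁)⁻¹ Df(z)‖ ≤ (1 - ν)² / ψ(ν)`;
* `‖A Dᵏf(z₁) / k!‖ ≤ γ ^ (k - 1) / (1 - ν) ^ (k + 1)` for `k ≥ 2`.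

The first two give the bound on `β(f,z₁)`; the last two, with `ψ(ν) ≤ 1`, give
`γ(f,z₁) ≤ γ / ((1 - ν) ψ(ν))`, and multiplying gives the bound on `α(f,z₁)`.
-/

noncomputable section

open Metric Filter

open scoped Nat

/-! ### Taylor series and the majorant principle -/

theorem norm_changeOriginSeries_le_choose {E G : Type*} [NormedAddCommGroup E] [NormedSpace ℝ E]
    [NormedAddCommGroup G] [NormedSpace ℝ G] (q : FormalMultilinearSeries ℝ E G) (k l : ℕ) :
    ‖q.changeOriginSeries k l‖ ≤ ((k + l).choose l : ℝ) * ‖q (k + l)‖ := by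
  refine (norm_sum_le Finset.univ fun s : { s : Finset (Fin (k + l)) // s.card = l } =>
    q.changeOriginSeriesTerm k l s s.2).trans ?_
  simp [FormalMultilinearSeries.norm_changeOriginSeriesTerm]

/-- An everywhere real-analytic function is given by its Taylor series on the whole ball of
convergence of that series. Near `z` the local power series agrees with the Taylor series on the
diagonal; the identity theorem on the (connected) ball does the rest. -/
theorem hasFPowerSeriesOnBall_taylor {E G : Type*} [NormedAddCommGroup E] [NormedSpace ℝ E]
    [NormedAddCommGroup G] [NormedSpace ℝ G] [CompleteSpace G]
    (F : E → G) (hF : ∀ w, AnalyticAt ℝ F w) (z : E) (q : FormalMultilinearSeries ℝ E G)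
    (hq : ∀ k, q k = ((k ! : ℝ)⁻¹) • iteratedFDeriv ℝ k F z) (hr : 0 < q.radius) :
    HasFPowerSeriesOnBall F q z q.radius := by
  have h0 : HasFPowerSeriesOnBall (fun w => q.sum (w - z)) q z q.radius := by
    simpa using (q.hasFPowerSeriesOnBall hr).comp_sub z
  obtain ⟨p, r, hp⟩ := hF z
  have hmin : 0 < min r q.radius := lt_min hp.r_pos hr
  have hev : F =ᶠ[nhds z] fun w => q.sum (w - z) := by
    filter_upwards [Metric.eball_mem_nhds z hmin] with w hw
    have hw' : w - z ∈ Metric.eball (0 : E) (min r q.radius) := by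
      simpa [edist_eq_enorm_sub] using hw
    have h1 := hp.hasSum_iteratedFDeriv
      (Metric.eball_subset_eball (min_le_left _ _) hw')
    have h2 := q.hasSum (Metric.eball_subset_eball (min_le_right _ _) hw')
    rw [add_sub_cancel] at h1
    refine h1.unique ?_
    simpa [hq] using h2
  have heq : Set.EqOn F (fun w => q.sum (w - z)) (Metric.eball z q.radius) := by
    refine AnalyticOnNhd.eqOn_of_preconnected_of_eventuallyEq (fun w _ => hF w)
      h0.analyticOnNhd ?_ (Metric.mem_eball_self hr) hev
    exact (convex_eball z q.radius).isPreconnected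
  exact h0.congr heq.symm

/-- Majorant principle: if `∑ c k t ^ k` majorizes the Taylor series of `F` at `z` and its
coefficients times `ρ ^ k` stay bounded for some `ρ > ‖h‖`, then the derivatives of `F` at `z + h`
are bounded by the derivatives of the majorant at `‖h‖`. -/
theorem norm_iteratedFDeriv_shift_le {E G : Type*} [NormedAddCommGroup E] [NormedSpace ℝ E]
    [NormedAddCommGroup G] [NormedSpace ℝ G] [CompleteSpace G]
    (F : E → G) (hF : ∀ w, AnalyticAt ℝ F w) (z h : E) (c : ℕ → ℝ)
    (hc : ∀ k, ‖iteratedFDeriv ℝ k F z‖ ≤ (k ! : ℝ) * c k)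
    (ρ C : ℝ) (hρ : ‖h‖ < ρ) (hC : ∀ k, c k * ρ ^ k ≤ C)
    (k : ℕ) (S : ℝ)
    (hS : HasSum (fun l => ((k + l).choose l : ℝ) * c (k + l) * ‖h‖ ^ l) S) :
    ‖iteratedFDeriv ℝ k F (z + h)‖ ≤ (k ! : ℝ) * S := by
  have hρ0 : 0 ≤ ρ := (norm_nonneg h).trans hρ.le
  lift ρ to NNReal using hρ0
  set q : FormalMultilinearSeries ℝ E G :=
    fun k => ((k ! : ℝ)⁻¹) • iteratedFDeriv ℝ k F z with hqdef
  have hqc : ∀ k, ‖q k‖ ≤ c k := fun k => by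
    have : (0 : ℝ) < k ! := by positivity
    simp only [hqdef, norm_smul, norm_inv, Real.norm_natCast]
    rw [inv_mul_le_iff₀ this]
    exact hc k
  have hrad : (ρ : ENNReal) ≤ q.radius := q.le_radius_of_bound C fun k =>
    (mul_le_mul_of_nonneg_right (hqc k) (by positivity)).trans (hC k)
  have hlt : ‖h‖ₑ < q.radius := by
    refine lt_of_lt_of_le ?_ hrad
    rw [enorm_eq_nnnorm]
    exact_mod_cast hρ
  have hr : 0 < q.radius := zero_le.trans_lt hlt
  have hball := (hasFPowerSeriesOnBall_taylor F hF z q (fun _ => rfl) hr).changeOrigin hlt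
  have hnorm : ‖q.changeOrigin h k‖ ≤ S := by
    refine tsum_of_norm_bounded hS fun l => ?_
    refine ((q.changeOriginSeries k l).le_opNorm _).trans ?_
    simp only [Finset.prod_const, Finset.card_univ, Fintype.card_fin]
    gcongr
    exact (norm_changeOriginSeries_le_choose q k l).trans
      (mul_le_mul_of_nonneg_left (hqc _) (by positivity))
  have hS0 : 0 ≤ S := (norm_nonneg _).trans hnorm
  -- The re-expanded series need not be symmetric; the derivative is its sum over permutations.
  refine ContinuousMultilinearMap.opNorm_le_bound (by positivity) fun v => ?_
  rw [hball.iteratedFDeriv_eq_sum_of_completeSpace v]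
  refine (norm_sum_le _ _).trans ?_
  refine (Finset.sum_le_card_nsmul _ _ (S * ∏ i, ‖v i‖) fun σ _ => ?_).trans_eq ?_
  · refine ((q.changeOrigin h k).le_opNorm _).trans ?_
    rw [Equiv.prod_comp σ (fun i => ‖v i‖)]
    gcongr
  · simp [Fintype.card_perm, mul_assoc]

/-- Affine maps have no derivatives of order at least two. -/
theorem iteratedFDeriv_affine {E : Type*} [NormedAddCommGroup E] [NormedSpace ℝ E]
    (a z w : E) (k : ℕ) : iteratedFDeriv ℝ (k + 2) (fun w => a + (w - z)) w = 0 := by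
  rw [← norm_eq_zero, ← norm_iteratedFDeriv_fderiv]
  have : fderiv ℝ (fun w => a + (w - z)) = fun _ => ContinuousLinearMap.id ℝ E := by
    ext1 x
    simp [fderiv_const_add, fderiv_sub_const]
  rw [this, iteratedFDeriv_succ_const]
  simp

/-! ### Smale's invariants and Banach's lemma -/

theorem psi_pos_of_lt {ν : ℝ} (hν : ν < 1 - Real.sqrt 2 / 2) : 0 < psi ν ∧ ν < 1 := by
  have h2 : Real.sqrt 2 ^ 2 = 2 := Real.sq_sqrt (by norm_num)
  have h0 : 0 < Real.sqrt 2 := by positivity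
  refine ⟨?_, by linarith⟩
  unfold psi
  nlinarith

theorem smale_norm_le {n : ℕ} (f : EuclideanSpace ℝ (Fin n) → EuclideanSpace ℝ (Fin n))
    (z : EuclideanSpace ℝ (Fin n))
    (hfin : BddAbove (Set.range fun k : ℕ => smaleTerm f z (k + 2))) (k : ℕ) :
    ‖(dfInv f z).compContinuousMultilinearMap (iteratedFDeriv ℝ (k + 2) f z)‖ ≤
      ((k + 2)! : ℝ) * smaleGamma f z ^ (k + 1) := by
  have h := le_ciSup hfin k
  change smaleTerm f z (k + 2) ≤ smaleGamma f z at h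
  unfold smaleTerm at h
  have hk : (1 : ℝ) / (((k + 2 : ℕ) : ℝ) - 1) = (((k + 1 : ℕ) : ℝ))⁻¹ := by
    push_cast
    rw [one_div]
    congr 1
    ring
  rw [hk] at h
  have h' := pow_le_pow_left₀ (by positivity) h (k + 1)
  rw [Real.rpow_inv_natCast_pow (by positivity) (by omega), div_le_iff₀' (by positivity)] at h'
  exact h'

theorem smaleGamma_nonneg {n : ℕ} (f : EuclideanSpace ℝ (Fin n) → EuclideanSpace ℝ (Fin n))
    (z : EuclideanSpace ℝ (Fin n)) : 0 ≤ smaleGamma f z :=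
  Real.iSup_nonneg fun k => by unfold smaleTerm; positivity

theorem smaleGamma_le {n : ℕ} (f : EuclideanSpace ℝ (Fin n) → EuclideanSpace ℝ (Fin n))
    (z : EuclideanSpace ℝ (Fin n)) (g : ℝ) (hg : 0 ≤ g)
    (h : ∀ k, ‖(dfInv f z).compContinuousMultilinearMap (iteratedFDeriv ℝ (k + 2) f z)‖ ≤
      ((k + 2)! : ℝ) * g ^ (k + 1)) : smaleGamma f z ≤ g := by
  refine ciSup_le fun k => ?_
  unfold smaleTerm
  have hk : (1 : ℝ) / (((k + 2 : ℕ) : ℝ) - 1) = (((k + 1 : ℕ) : ℝ))⁻¹ := by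
    push_cast
    rw [one_div]
    congr 1
    ring
  rw [hk]
  calc _ ≤ (g ^ (k + 1)) ^ (((k + 1 : ℕ) : ℝ))⁻¹ := by
        apply Real.rpow_le_rpow (by positivity) _ (by positivity)
        rw [div_le_iff₀' (by positivity)]
        exact h k
    _ = g := Real.pow_rpow_inv_natCast hg (by omega)

/-- Banach's perturbation lemma. The bound follows from `T⁻¹ = 1 - T⁻¹ (T - 1)`, and only needs
`‖1‖ ≤ 1`, so `E` may be trivial. -/
theorem isUnit_and_norm_inverse_le {E : Type*} [NormedAddCommGroup E] [NormedSpace ℝ E]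
    [CompleteSpace E] (T : E →L[ℝ] E) (e : ℝ) (he : e < 1) (hT : ‖T - 1‖ ≤ e) :
    IsUnit T ∧ ‖Ring.inverse T‖ ≤ (1 - e)⁻¹ := by
  have hu : IsUnit T := by
    have := isUnit_one_sub_of_norm_lt_one (x := 1 - T) (by rw [norm_sub_rev]; linarith)
    simpa using this
  refine ⟨hu, ?_⟩
  have h1 : Ring.inverse T = 1 - Ring.inverse T * (T - 1) := by
    rw [mul_sub, Ring.inverse_mul_cancel _ hu]; simp
  have h2 : ‖Ring.inverse T‖ ≤ 1 + ‖Ring.inverse T‖ * e := by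
    calc ‖Ring.inverse T‖ = ‖1 - Ring.inverse T * (T - 1)‖ := by rw [← h1]
      _ ≤ ‖(1 : E →L[ℝ] E)‖ + ‖Ring.inverse T * (T - 1)‖ := norm_sub_le _ _
      _ ≤ 1 + ‖Ring.inverse T‖ * e := by
        gcongr
        · exact ContinuousLinearMap.norm_id_le
        · exact (norm_mul_le _ _).trans (by gcongr)
  rw [← one_div, le_div_iff₀ (by linarith)]
  linarith

/-! ### The majorant series -/

/-- Taylor coefficients of the majorant `t ↦ ∑_{k ≥ 2} γ ^ (k - 1) t ^ k`, with vanishing constant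
and linear terms. -/
def majCoeff (γ : ℝ) (k : ℕ) : ℝ := if 2 ≤ k then γ ^ (k - 1) else 0

/-- The value of the majorant at `β`. -/
theorem hasSum_majCoeff_zero (γ β : ℝ) (hν : |β * γ| < 1) :
    HasSum (fun l => ((0 + l).choose l : ℝ) * majCoeff γ (0 + l) * β ^ l)
      (β * (β * γ) / (1 - β * γ)) := by
  rw [← hasSum_nat_add_iff' 2]
  have h := (hasSum_geometric_of_abs_lt_one hν).mul_left (β * (β * γ))
  convert! h using 1
  · funext l
    simp [majCoeff, mul_pow]
    ring
  · simp [Finset.sum_range_succ, majCoeff, div_eq_mul_inv]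

/-- The first derivative of the majorant at `β`. -/
theorem hasSum_majCoeff_one (γ β : ℝ) (hν : |β * γ| < 1) :
    HasSum (fun l => ((1 + l).choose l : ℝ) * majCoeff γ (1 + l) * β ^ l)
      (1 / (1 - β * γ) ^ 2 - 1) := by
  have h := hasSum_choose_mul_geometric_of_norm_lt_one 1 (r := β * γ) (by simpa using hν)
  rw [← hasSum_nat_add_iff' 1] at h ⊢
  convert! h using 1
  · funext l
    have : (1 + (l + 1)).choose (l + 1) = (l + 1 + 1).choose 1 := by
      rw [add_comm 1, Nat.choose_symm_add]
    rw [this]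
    simp [majCoeff, mul_pow, show 2 ≤ 1 + (l + 1) by omega]
    ring
  · simp [majCoeff]

/-- The `(k + 2)`-nd derivative of the majorant at `β`, divided by `(k + 2)!`. -/
theorem hasSum_majCoeff_add_two (γ β : ℝ) (hν : |β * γ| < 1) (k : ℕ) :
    HasSum (fun l => ((k + 2 + l).choose l : ℝ) * majCoeff γ (k + 2 + l) * β ^ l)
      (γ ^ (k + 1) / (1 - β * γ) ^ (k + 3)) := by
  have h := (hasSum_choose_mul_geometric_of_norm_lt_one (k + 2) (r := β * γ)
    (by simpa using hν)).mul_left (γ ^ (k + 1))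
  convert! h using 1
  · funext l
    have : (k + 2 + l).choose l = (l + (k + 2)).choose (k + 2) := by
      rw [add_comm, Nat.choose_symm_add]
    rw [this]
    simp only [majCoeff, show 2 ≤ k + 2 + l by omega, if_true,
      show k + 2 + l - 1 = k + 1 + l by omega]
    ring
  · rw [mul_one_div]

/-! ### The estimates at the Newton iterate -/

/-- Lemma 9 (flat case): if `z₁ = N_f(z)` and `ν = ‖z-z₁‖γ(f,z) < 1-√2/2`,
then `Df(z₁)` is invertible, `β(f,z₁) ≤ ((1-ν)/ψ(ν))β(f,z)²γ(f,z)` and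
`α(f,z₁) ≤ α(f,z)²/ψ(ν)²` where `α = βγ`. -/
theorem newton_alpha_beta_bound {n : ℕ}
    (f : EuclideanSpace ℝ (Fin n) → EuclideanSpace ℝ (Fin n))
    (hf : ∀ w, AnalyticAt ℝ f w)
    (z : EuclideanSpace ℝ (Fin n))
    (hinv : IsUnit (fderiv ℝ f z))
    (hfin : BddAbove (Set.range fun k : ℕ => smaleTerm f z (k + 2)))
    (hν : ‖z - newton f z‖ * smaleGamma f z < 1 - Real.sqrt 2 / 2) :
    IsUnit (fderiv ℝ f (newton f z)) ∧
    smaleBeta f (newton f z) ≤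
      ((1 - ‖z - newton f z‖ * smaleGamma f z) /
          psi (‖z - newton f z‖ * smaleGamma f z)) *
        smaleBeta f z ^ 2 * smaleGamma f z ∧
    smaleBeta f (newton f z) * smaleGamma f (newton f z) ≤
      (smaleBeta f z * smaleGamma f z) ^ 2 /
        psi (‖z - newton f z‖ * smaleGamma f z) ^ 2 := by
  set z₁ := newton f z with hz₁
  set γ := smaleGamma f z with hγ
  have hγ0 : 0 ≤ γ := smaleGamma_nonneg f z
  have hβ : ‖z - z₁‖ = smaleBeta f z := by simp [hz₁, newton, smaleBeta]
  rw [hβ] at hν ⊢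
  set β := smaleBeta f z with hβdef
  have hβ0 : 0 ≤ β := norm_nonneg _
  obtain ⟨hψ, hν1⟩ := psi_pos_of_lt hν
  have hν0 : 0 ≤ β * γ := by positivity
  have habs : |β * γ| < 1 := by rwa [abs_of_nonneg hν0]
  set A := dfInv f z with hA
  have hAD : A * fderiv ℝ f z = 1 := Ring.inverse_mul_cancel _ hinv
  have hDA : fderiv ℝ f z * A = 1 := Ring.mul_inverse_cancel _ hinv
  -- `F` is `A ∘ f` minus its linearization at `z`; the Newton step makes that linearization
  -- vanish at `z₁`.
  set F : EuclideanSpace ℝ (Fin n) → EuclideanSpace ℝ (Fin n) :=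
    fun w => (A ∘ f) w - (A (f z) + (w - z)) with hFdef
  have hAf : ∀ w, AnalyticAt ℝ (A ∘ f) w := fun w => (A.analyticAt _).comp (hf w)
  have hLa : ∀ w, AnalyticAt ℝ (fun w => A (f z) + (w - z)) w := fun w => by fun_prop
  have hFa : ∀ w, AnalyticAt ℝ F w := fun w => (hAf w).sub (hLa w)
  have hFd : ∀ w, fderiv ℝ F w = A * fderiv ℝ f w - 1 := fun w => by
    have h1 : HasFDerivAt (A ∘ f) (A * fderiv ℝ f w) w :=
      A.hasFDerivAt.comp w (hf w).differentiableAt.hasFDerivAt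
    have h2 : HasFDerivAt (fun w => A (f z) + (w - z)) (1 : EuclideanSpace ℝ (Fin n) →L[ℝ] _) w :=
      ((hasFDerivAt_id w).sub_const z).const_add _
    exact (h1.sub h2).fderiv
  have hFk : ∀ w k, iteratedFDeriv ℝ (k + 2) F w =
      A.compContinuousMultilinearMap (iteratedFDeriv ℝ (k + 2) f w) := fun w k => by
    have h1 := iteratedFDeriv_sub_apply (i := k + 2) (hAf w).contDiffAt (hLa w).contDiffAt
    have h2 := A.iteratedFDeriv_comp_left (n := (k + 2 : ℕ)) (hf w).contDiffAt le_rfl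
    rw [iteratedFDeriv_affine, sub_zero, h2] at h1
    exact h1
  have hc : ∀ k, ‖iteratedFDeriv ℝ k F z‖ ≤ (k ! : ℝ) * majCoeff γ k := by
    rintro (_ | _ | k)
    · simp [majCoeff, hFdef]
    · rw [← norm_iteratedFDeriv_fderiv, norm_iteratedFDeriv_zero, hFd, hAD]
      simp [majCoeff]
    · rw [hFk]
      simpa [majCoeff] using smale_norm_le f z hfin k
  -- Room beyond `β` is needed for the Taylor ball to contain `z₁` in its interior.
  obtain ⟨ρ, hρ, hργ⟩ : ∃ ρ, β < ρ ∧ ρ * γ ≤ 1 := by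
    refine ⟨β + (1 - β * γ) / (1 + γ), by
      have : 0 < (1 - β * γ) / (1 + γ) := div_pos (by linarith) (by linarith)
      linarith, ?_⟩
    have : (1 - β * γ) / (1 + γ) * γ ≤ 1 - β * γ := by
      rw [div_mul_eq_mul_div, div_le_iff₀ (by linarith)]
      nlinarith
    linarith
  have hρ0 : 0 ≤ ρ := hβ0.trans hρ.le
  have hC : ∀ k, majCoeff γ k * ρ ^ k ≤ ρ := by
    rintro (_ | _ | k)
    · simpa [majCoeff] using hρ0
    · simpa [majCoeff] using hρ0
    · have h1 : (ρ * γ) ^ (k + 1) ≤ 1 := pow_le_one₀ (by positivity) hργ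
      calc majCoeff γ (k + 2) * ρ ^ (k + 2) = (ρ * γ) ^ (k + 1) * ρ := by
            simp [majCoeff, mul_pow]; ring
        _ ≤ 1 * ρ := by gcongr
        _ = ρ := one_mul _
  have hh : ‖z₁ - z‖ = β := by rw [norm_sub_rev, hβ]
  have key : ∀ k S, HasSum (fun l => ((k + l).choose l : ℝ) * majCoeff γ (k + l) * β ^ l) S →
      ‖iteratedFDeriv ℝ k F z₁‖ ≤ (k ! : ℝ) * S := fun k S hS => by
    have := norm_iteratedFDeriv_shift_le F hFa z (z₁ - z) (majCoeff γ) hc ρ ρ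
      (by rw [hh]; exact hρ) hC k S (by rw [hh]; exact hS)
    rwa [add_sub_cancel] at this
  have k0 : ‖A (f z₁)‖ ≤ β * (β * γ) / (1 - β * γ) := by
    have h := key 0 _ (hasSum_majCoeff_zero γ β habs)
    rw [norm_iteratedFDeriv_zero] at h
    have hF1 : F z₁ = A (f z₁) := by simp [hFdef, hz₁, newton, ← hA]
    rw [hF1] at h
    simpa using h
  set T := A * fderiv ℝ f z₁ with hT
  have k1 : ‖T - 1‖ ≤ 1 / (1 - β * γ) ^ 2 - 1 := by
    have h := key 1 _ (hasSum_majCoeff_one γ β habs)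
    rw [← norm_iteratedFDeriv_fderiv, norm_iteratedFDeriv_zero, hFd] at h
    simpa using h
  have hpos : 0 < 1 - β * γ := by linarith
  have he : 1 - (1 / (1 - β * γ) ^ 2 - 1) = psi (β * γ) / (1 - β * γ) ^ 2 := by
    unfold psi
    field_simp
    ring
  obtain ⟨hTu, hTn⟩ := isUnit_and_norm_inverse_le T _
    (by have : 0 < psi (β * γ) / (1 - β * γ) ^ 2 := by positivity
        linarith) k1
  rw [he, inv_div] at hTn
  have hDT : fderiv ℝ f z₁ = fderiv ℝ f z * T := by rw [hT, ← mul_assoc, hDA, one_mul]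
  have hu : IsUnit (fderiv ℝ f z₁) := by rw [hDT]; exact hinv.mul hTu
  have hB : dfInv f z₁ = Ring.inverse T * A := by
    have h1 : Ring.inverse T * A * fderiv ℝ f z₁ = 1 := by
      rw [mul_assoc, ← hT, Ring.inverse_mul_cancel _ hTu]
    calc dfInv f z₁ = Ring.inverse T * A * fderiv ℝ f z₁ * Ring.inverse (fderiv ℝ f z₁) := by
          rw [h1, one_mul, dfInv]
      _ = Ring.inverse T * A := by rw [mul_assoc, Ring.mul_inverse_cancel _ hu, mul_one]
  have hβ1 : smaleBeta f z₁ ≤ ((1 - β * γ) / psi (β * γ)) * β ^ 2 * γ := by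
    unfold smaleBeta
    rw [hB]
    calc ‖(Ring.inverse T * A) (f z₁)‖ ≤ ‖Ring.inverse T‖ * ‖A (f z₁)‖ :=
          (Ring.inverse T).le_opNorm _
      _ ≤ ((1 - β * γ) ^ 2 / psi (β * γ)) * (β * (β * γ) / (1 - β * γ)) := by gcongr
      _ = _ := by field_simp
  have hψ1 : psi (β * γ) ≤ 1 := by unfold psi; nlinarith
  have hγ1 : smaleGamma f z₁ ≤ γ / ((1 - β * γ) * psi (β * γ)) := by
    refine smaleGamma_le f z₁ _ (by positivity) fun k => ?_
    have hcomp : (dfInv f z₁).compContinuousMultilinearMap (iteratedFDeriv ℝ (k + 2) f z₁) =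
        (Ring.inverse T).compContinuousMultilinearMap (iteratedFDeriv ℝ (k + 2) F z₁) := by
      rw [hB, hFk]; rfl
    rw [hcomp]
    calc _ ≤ ‖Ring.inverse T‖ * ‖iteratedFDeriv ℝ (k + 2) F z₁‖ :=
          ContinuousLinearMap.norm_compContinuousMultilinearMap_le _ _
      _ ≤ ((1 - β * γ) ^ 2 / psi (β * γ)) *
          (((k + 2)! : ℝ) * (γ ^ (k + 1) / (1 - β * γ) ^ (k + 3))) := by
        gcongr
        exact key _ _ (hasSum_majCoeff_add_two γ β habs k)
      _ = ((k + 2)! : ℝ) * (γ ^ (k + 1) / ((1 - β * γ) ^ (k + 1) * psi (β * γ))) := by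
        rw [show k + 3 = (k + 1) + 2 by ring, pow_add (1 - β * γ) (k + 1) 2]
        field_simp
      _ ≤ ((k + 2)! : ℝ) * (γ ^ (k + 1) / ((1 - β * γ) ^ (k + 1) * psi (β * γ) ^ (k + 1))) := by
        -- `ψ ≤ 1` allows raising `ψ` to the power `k + 1`, giving an exact `(k + 1)`-st power.
        gcongr
        exact pow_le_of_le_one hψ.le hψ1 (by omega)
      _ = _ := by rw [div_pow, mul_pow]
  refine ⟨hu, hβ1, ?_⟩
  calc smaleBeta f z₁ * smaleGamma f z₁
      ≤ (((1 - β * γ) / psi (β * γ)) * β ^ 2 * γ) * (γ / ((1 - β * γ) * psi (β * γ))) :=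
        mul_le_mul hβ1 hγ1 (smaleGamma_nonneg _ _) (by positivity)
    _ = _ := by field_simp
end
end

section
/- Let f : ℝⁿ → ℝⁿ be analytic and z ∈ ℝⁿ with α(f,z) < α₀, where α₀ ≈ 0.130716944 is the root of 2u = ψ(u)² in [0, 1-√2/2]. Then the Newton sequence z₀ = z, z_{k+1} = z_k - Df(z_k)⁻¹f(z_k) is defined for all k, converges to a zero ζ of f, satisfies ‖z_{k+1} - z_k‖ ≤ (1/2)^(2^k - 1)·β(f,z), and ‖ζ - z‖ ≤ σ·β(f,z) with σ = ∑_{k≥0}(1/2)^(2^k-1). -/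
/-!
The proof follows `β` and `γ` through one Newton step. Put `g = Df(x)⁻¹ f`, `h = -g(x)` and
`u = βγ`. The Taylor series of `g` at `x` has linear part the identity and coefficients of degree
`m ≥ 2` of norm at most `γ ^ (m - 1)`. Recentring it at the Newton iterate `x' = x + h` and summing
the resulting binomial series gives

* `‖g(x')‖ ≤ ‖h‖ u / (1 - u)`, the terms of degree at most one cancelling;
* `‖Dg(x') - 1‖ ≤ 1 / (1 - u)² - 1 < 1`, so `Dg(x')` is invertible with
  `‖Dg(x')⁻¹‖ ≤ (1 - u)² / ψ(u)`;
* coefficients of degree `m` at `x'` of norm at most `γ ^ (m - 1) / (1 - u) ^ (m + 1)`.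

As `Df(x')⁻¹ f = Dg(x')⁻¹ g`, these combine to `β(x') ≤ u (1 - u) / ψ(u) β(x)` and
`γ(x') ≤ γ / (ψ(u) (1 - u))` (`GammaControlled.step`), hence `α(x') ≤ (u / ψ(u))²`. Since
`2a = ψ(a)²` and `ψ` is decreasing on `[0, 1]`, both `α` and `β` along the Newton sequence are
dominated by `(1/2) ^ (2 ^ k - 1)` times their initial bounds (`newton_iterate_control`). The steps
are then summable, and the limit is a zero of `f` because `f(x) = Df(x)(x - x')`.

Real analyticity on the whole space does not by itself make the Taylor series at `z` represent `f`
on the ball of radius `1 / γ`; this comes from the identity theorem on that ball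
(`gammaControlled_of_smaleGamma_le`). Later points need no such argument, since their balls of
radius `1 / γ(x')` lie in the earlier ones.
-/

noncomputable section

open Metric Filter

/-! ### Recentred power series and perturbations of the identity -/

/-- Since `changeOrigin h k = ∑ₗ changeOriginSeries k l (h, …, h)` and the `l`-th summand consists of
`(k + l).choose l` terms of norm at most `‖p (k + l)‖ ‖h‖ ^ l`, any summable majorant of these
numbers bounds the recentred coefficient. -/
lemma norm_changeOrigin_le_of_hasSum {E F : Type*} [NormedAddCommGroup E] [NormedSpace ℝ E]
    [NormedAddCommGroup F] [NormedSpace ℝ F]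
    (p : FormalMultilinearSeries ℝ E F) (h : E) (k : ℕ) {d : ℕ → ℝ} {S : ℝ} (hS : HasSum d S)
    (hd : ∀ l, ((k + l).choose l : ℝ) * (‖p (k + l)‖ * ‖h‖ ^ l) ≤ d l) :
    ‖p.changeOrigin h k‖ ≤ S := by
  have key : ∀ l, ‖p.changeOriginSeries k l fun _ => h‖ ≤ d l := by
    intro l
    refine le_trans ?_ (hd l)
    have h1 := p.nnnorm_changeOriginSeries_apply_le_tsum k l h
    have h2 : Fintype.card { s : Finset (Fin (k + l)) // s.card = l } = (k + l).choose l := by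
      simp
    rw [tsum_fintype, Finset.sum_const, Finset.card_univ, h2, nsmul_eq_mul] at h1
    exact_mod_cast h1
  exact tsum_of_norm_bounded hS key

lemma norm_inverse_one_add_le {R : Type*} [NormedRing R] [HasSummableGeomSeries R]
    (h1 : ‖(1 : R)‖ ≤ 1) {D : R} {δ : ℝ} (hD : ‖D‖ ≤ δ) (hδ : δ < 1) :
    IsUnit (1 + D) ∧ ‖Ring.inverse (1 + D)‖ ≤ (1 - δ)⁻¹ := by
  have hn : ‖-D‖ < 1 := by rw [norm_neg]; linarith
  have e : 1 + D = 1 - (-D) := by abel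
  rw [e]
  refine ⟨isUnit_one_sub_of_norm_lt_one hn, ?_⟩
  rw [← geom_series_eq_inverse _ hn]
  refine (tsum_geometric_le_of_norm_lt_one _ hn).trans ?_
  have : (1 - ‖-D‖)⁻¹ ≤ (1 - δ)⁻¹ := by
    apply inv_anti₀ (by linarith)
    rw [norm_neg]; linarith
  linarith

/-! ### One Newton step -/

/-- A sufficient form of `γ(f, x) ≤ γ`: the derivative at `x` is invertible, and the nonlinear part
`Df(x)⁻¹ f - id` is given on the ball of radius `1 / γ` by a power series whose coefficients of
degree `m ≥ 2` have norm at most `γ ^ (m - 1)`. -/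
def GammaControlled {n : ℕ} (f : EuclideanSpace ℝ (Fin n) → EuclideanSpace ℝ (Fin n))
    (x : EuclideanSpace ℝ (Fin n)) (γ : ℝ) : Prop :=
  IsUnit (fderiv ℝ f x) ∧
    ∃ p : FormalMultilinearSeries ℝ (EuclideanSpace ℝ (Fin n)) (EuclideanSpace ℝ (Fin n)),
      HasFPowerSeriesOnBall (fun y => dfInv f x (f y) - y) p x (ENNReal.ofReal (1 / γ)) ∧
      ∀ m, 2 ≤ m → ‖p m‖ ≤ γ ^ (m - 1)

lemma fderiv_dfInv_comp_sub {n : ℕ}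
    {f : EuclideanSpace ℝ (Fin n) → EuclideanSpace ℝ (Fin n)} (hf : Differentiable ℝ f)
    (x w : EuclideanSpace ℝ (Fin n)) :
    fderiv ℝ (fun y => dfInv f x (f y) - y) w = dfInv f x * fderiv ℝ f w - 1 := by
  have h := (((dfInv f x).hasFDerivAt (x := f w)).comp w (hf w).hasFDerivAt).sub (hasFDerivAt_id w)
  exact h.fderiv

/-- Recentring at the Newton iterate: the effect of one Newton step on `β` and `γ`. -/
lemma GammaControlled.step {n : ℕ}
    {f : EuclideanSpace ℝ (Fin n) → EuclideanSpace ℝ (Fin n)} (hf : Differentiable ℝ f)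
    {x : EuclideanSpace ℝ (Fin n)} {γ u : ℝ} (hγ : 0 < γ) (hx : GammaControlled f x γ)
    (hu : smaleBeta f x * γ = u) (hu1 : u < 1) (hψ : 0 < psi u) :
    GammaControlled f (newton f x) (γ / (psi u * (1 - u))) ∧
      smaleBeta f (newton f x) ≤ u * (1 - u) / psi u * smaleBeta f x := by
  obtain ⟨hA, p, hp, hpb⟩ := hx
  set h := -dfInv f x (f x) with hh
  have hnew : newton f x = x + h := by simp [newton, hh, sub_eq_add_neg]
  have hnh : ‖h‖ = smaleBeta f x := by simp [hh, smaleBeta]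
  have hu' : ‖h‖ * γ = u := by rw [hnh, hu]
  have hu0 : 0 ≤ u := by rw [← hu']; positivity
  have h1u : 0 < 1 - u := by linarith
  have hunorm : ‖u‖ < 1 := by rwa [Real.norm_of_nonneg hu0]
  have hψ1 : psi u ≤ 1 := by unfold psi; nlinarith
  have hψ2 : psi u = 2 * (1 - u) ^ 2 - 1 := by unfold psi; ring
  have hhγ : ‖h‖ < 1 / γ := by rw [lt_div_iff₀ hγ, hu']; exact hu1
  have hhe : ‖h‖ₑ < ENNReal.ofReal (1 / γ) := by
    rw [← ofReal_norm]
    exact (ENNReal.ofReal_lt_ofReal_iff (by positivity)).2 hhγ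
  have hAi : dfInv f x * fderiv ℝ f x = 1 := Ring.inverse_mul_cancel _ hA
  have hAi' : fderiv ℝ f x * dfInv f x = 1 := Ring.mul_inverse_cancel _ hA
  have hp1 : p 1 = 0 := by
    have := hp.hasFPowerSeriesAt.fderiv_eq
    rw [fderiv_dfInv_comp_sub hf, hAi, sub_self] at this
    exact (LinearIsometryEquiv.map_eq_zero_iff _).1 this.symm
  set q := p.changeOrigin h with hq_def
  have hq : HasFPowerSeriesOnBall (fun y => dfInv f x (f y) - y) q (x + h)
      (ENNReal.ofReal (1 / γ) - ‖h‖ₑ) := hp.changeOrigin hhe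
  -- The value at the new point is the tail of the series, because the Newton step cancels the
  -- terms of degree at most one.
  have hval : ‖dfInv f x (f (x + h))‖ ≤ ‖h‖ * u * (1 - u)⁻¹ := by
    have h0 := hp.hasSum (y := h) (by rwa [Metric.mem_eball, edist_zero_right])
    have h2 := (hasSum_nat_add_iff' 2).2 h0
    have hz : dfInv f x (f (x + h)) - (x + h) - ∑ i ∈ Finset.range 2, (p i fun _ => h)
        = dfInv f x (f (x + h)) := by
      rw [Finset.sum_range_succ, Finset.sum_range_one, hp1, hp.coeff_zero]
      have hx' : dfInv f x (f x) = -h := by rw [hh, neg_neg]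
      rw [hx', zero_apply]
      abel
    rw [hz] at h2
    rw [← h2.tsum_eq]
    refine tsum_of_norm_bounded ((hasSum_geometric_of_lt_one hu0 hu1).mul_left (‖h‖ * u)) ?_
    intro i
    refine ((p (i + 2)).le_opNorm _).trans ?_
    rw [Fin.prod_const]
    calc ‖p (i + 2)‖ * ‖h‖ ^ (i + 2) ≤ γ ^ (i + 1) * ‖h‖ ^ (i + 2) := by
          gcongr; exact hpb (i + 2) (by omega)
      _ = ‖h‖ * u * u ^ i := by rw [← hu']; ring
  set D := fderiv ℝ (fun y => dfInv f x (f y) - y) (x + h) with hD_def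
  have hDq : D = continuousMultilinearCurryFin1 ℝ (EuclideanSpace ℝ (Fin n))
      (EuclideanSpace ℝ (Fin n)) (q 1) := hq.hasFPowerSeriesAt.fderiv_eq
  have hDe : D = dfInv f x * fderiv ℝ f (x + h) - 1 := fderiv_dfInv_comp_sub hf _ _
  have hDn : ‖D‖ ≤ 1 / (1 - u) ^ 2 - 1 := by
    rw [hDq, LinearIsometryEquiv.norm_map]
    have hs := hasSum_choose_mul_geometric_of_norm_lt_one 1 hunorm
    have hs' := hs.update 0 0
    have e : 0 - ((0 + 1).choose 1 : ℝ) * u ^ 0 + 1 / (1 - u) ^ (1 + 1) =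
        1 / (1 - u) ^ 2 - 1 := by norm_num; ring
    refine norm_changeOrigin_le_of_hasSum p h 1 (S := 1 / (1 - u) ^ 2 - 1)
      (d := Function.update (fun n : ℕ => ((n + 1).choose 1 : ℝ) * u ^ n) 0 0) ?_ ?_
    · exact e ▸ hs'
    · rintro (_ | l)
      · simp [hp1]
      · rw [Function.update_of_ne (by omega), add_comm 1 (l + 1), Nat.choose_symm_add]
        gcongr
        calc ‖p (l + 1 + 1)‖ * ‖h‖ ^ (l + 1) ≤ γ ^ (l + 1) * ‖h‖ ^ (l + 1) := by
              gcongr; exact hpb _ (by omega)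
          _ = u ^ (l + 1) := by rw [← hu']; ring
  have hqb : ∀ m, 2 ≤ m → ‖q m‖ ≤ 1 / (1 - u) ^ (m + 1) * γ ^ (m - 1) := by
    intro m hm
    refine norm_changeOrigin_le_of_hasSum p h m
      ((hasSum_choose_mul_geometric_of_norm_lt_one m hunorm).mul_right (γ ^ (m - 1))) ?_
    intro l
    rw [add_comm m l, Nat.choose_symm_add, mul_assoc]
    refine mul_le_mul_of_nonneg_left ?_ (Nat.cast_nonneg _)
    calc ‖p (l + m)‖ * ‖h‖ ^ l ≤ γ ^ (l + (m - 1)) * ‖h‖ ^ l := by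
          gcongr
          have := hpb (l + m) (by omega)
          rwa [Nat.add_sub_assoc (by omega)] at this
      _ = u ^ l * γ ^ (m - 1) := by rw [← hu', pow_add]; ring
  have hδ : 1 / (1 - u) ^ 2 - 1 < 1 := by
    rw [sub_lt_iff_lt_add, div_lt_iff₀ (by positivity)]; linarith
  obtain ⟨hMu, hMn⟩ := norm_inverse_one_add_le ContinuousLinearMap.norm_id_le hDn hδ
  have hMn' : ‖Ring.inverse (1 + D)‖ ≤ (1 - u) ^ 2 / psi u := by
    refine hMn.trans_eq ?_
    have : (1 - (1 / (1 - u) ^ 2 - 1)) = psi u / (1 - u) ^ 2 := by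
      rw [hψ2]; field_simp; ring
    rw [this, inv_div]
  set N := Ring.inverse (1 + D) with hN
  have hMe : 1 + D = dfInv f x * fderiv ℝ f (x + h) := by rw [hDe]; abel
  have hA' : fderiv ℝ f (x + h) = fderiv ℝ f x * (1 + D) := by
    rw [hMe, ← mul_assoc, hAi', one_mul]
  have hAu' : IsUnit (fderiv ℝ f (x + h)) := by rw [hA']; exact hA.mul hMu
  have hinv' : dfInv f (x + h) = N * dfInv f x := by
    have h1 : (N * dfInv f x) * fderiv ℝ f (x + h) = 1 := by
      rw [mul_assoc, ← hMe]; exact Ring.inverse_mul_cancel _ hMu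
    calc dfInv f (x + h) = ((N * dfInv f x) * fderiv ℝ f (x + h)) * dfInv f (x + h) := by
          rw [h1, one_mul]
      _ = N * dfInv f x := by
          rw [mul_assoc]
          unfold dfInv
          rw [Ring.mul_inverse_cancel _ hAu', mul_one]
  rw [hnew]
  refine ⟨⟨hAu', N.compFormalMultilinearSeries q + (N - 1).fpowerSeries (x + h), ?_, ?_⟩, ?_⟩
  · have hs := (N.comp_hasFPowerSeriesOnBall hq).add
      (((N - 1).hasFPowerSeriesOnBall (x + h)).mono hq.r_pos le_top)
    have hs2 := hs.mono (r' := ENNReal.ofReal (1 / (γ / (psi u * (1 - u))))) (by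
        rw [ENNReal.ofReal_pos]; positivity) (by
        rw [← ofReal_norm, ← ENNReal.ofReal_sub _ (norm_nonneg _)]
        apply ENNReal.ofReal_le_ofReal
        rw [one_div_div, div_le_iff₀ hγ, sub_mul, hu', one_div, inv_mul_cancel₀ hγ.ne']
        nlinarith)
    convert hs2 using 1
    funext y
    simp [hinv']
  · intro m hm
    obtain ⟨k, rfl⟩ := Nat.exists_eq_add_of_le' hm
    have e : (N.compFormalMultilinearSeries q + (N - 1).fpowerSeries (x + h)) (k + 2)
        = N.compContinuousMultilinearMap (q (k + 2)) := by
      simp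
    rw [e]
    refine (ContinuousLinearMap.norm_compContinuousMultilinearMap_le _ _).trans ?_
    have h1 := hqb (k + 2) hm
    simp only [Nat.add_succ_sub_one] at h1 ⊢
    calc ‖N‖ * ‖q (k + 2)‖
        ≤ (1 - u) ^ 2 / psi u * (1 / (1 - u) ^ (k + 2 + 1) * γ ^ (k + 1)) := by gcongr
      _ = (1 / psi u) ^ 1 * (γ / (1 - u)) ^ (k + 1) := by
          rw [div_pow γ, pow_one]; field_simp; ring
      _ ≤ (1 / psi u) ^ (k + 1) * (γ / (1 - u)) ^ (k + 1) := by
          gcongr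
          · rw [le_div_iff₀ hψ]; linarith
          · omega
      _ = (γ / (psi u * (1 - u))) ^ (k + 1) := by
          rw [← mul_pow]; congr 1; field_simp
  · have : smaleBeta f (x + h) = ‖N (dfInv f x (f (x + h)))‖ := by
      simp [smaleBeta, hinv']
    rw [this, ← hnh]
    calc ‖N (dfInv f x (f (x + h)))‖ ≤ (1 - u) ^ 2 / psi u * (‖h‖ * u * (1 - u)⁻¹) :=
          N.le_of_opNorm_le_of_le hMn' hval
      _ = _ := by field_simp

/-! ### The starting point -/

/-- The Taylor series of `Df(z)⁻¹ f` at `z` converges on the ball of radius `1 / γ`. As `f` is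
analytic everywhere, the identity theorem shows that it still represents `Df(z)⁻¹ f` there. -/
lemma gammaControlled_of_smaleGamma_le {n : ℕ}
    {f : EuclideanSpace ℝ (Fin n) → EuclideanSpace ℝ (Fin n)} (hf : ∀ w, AnalyticAt ℝ f w)
    {z : EuclideanSpace ℝ (Fin n)} (hinv : IsUnit (fderiv ℝ f z))
    (hfin : BddAbove (Set.range fun k : ℕ => smaleTerm f z (k + 2)))
    {γ : ℝ} (hγ : 0 < γ) (hγ' : smaleGamma f z ≤ γ) : GammaControlled f z γ := by
  refine ⟨hinv, ?_⟩
  set L := dfInv f z with hL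
  let P : FormalMultilinearSeries ℝ (EuclideanSpace ℝ (Fin n)) (EuclideanSpace ℝ (Fin n)) :=
    fun k => ((Nat.factorial k : ℝ)⁻¹) • L.compContinuousMultilinearMap (iteratedFDeriv ℝ k f z)
  have hP : ∀ m, 2 ≤ m → ‖P m‖ ≤ γ ^ (m - 1) := by
    intro m hm
    obtain ⟨k, rfl⟩ := Nat.exists_eq_add_of_le' hm
    have h1 : smaleTerm f z (k + 2) ≤ γ := (le_ciSup hfin k).trans hγ'
    have h2 : ‖P (k + 2)‖ = ‖L.compContinuousMultilinearMap (iteratedFDeriv ℝ (k + 2) f z)‖ /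
        (Nat.factorial (k + 2) : ℝ) := by
      simp only [P, norm_smul, norm_inv, Real.norm_natCast]
      rw [div_eq_inv_mul]
    have h3 : smaleTerm f z (k + 2) = ‖P (k + 2)‖ ^ ((1 : ℝ) / ((k + 1 : ℕ) : ℝ)) := by
      rw [h2, smaleTerm]; congr 2; push_cast; ring
    rw [h3] at h1
    have h4 : ‖P (k + 2)‖ = (‖P (k + 2)‖ ^ ((1 : ℝ) / ((k + 1 : ℕ) : ℝ))) ^ (k + 1) := by
      rw [one_div, Real.rpow_inv_natCast_pow (norm_nonneg _) (by omega)]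
    rw [h4]
    simp only [Nat.add_succ_sub_one]
    gcongr
  have hrad : ENNReal.ofReal (1 / γ) ≤ P.radius := by
    refine P.le_radius_of_eventually_le (r := (1 / γ).toNNReal) (1 / γ) ?_
    filter_upwards [Filter.eventually_ge_atTop 2] with m hm
    rw [Real.coe_toNNReal _ (by positivity)]
    obtain ⟨k, rfl⟩ := Nat.exists_eq_add_of_le' hm
    have := hP (k + 2) hm
    simp only [Nat.add_succ_sub_one] at this
    calc ‖P (k + 2)‖ * (1 / γ) ^ (k + 2) ≤ γ ^ (k + 1) * (1 / γ) ^ (k + 2) := by gcongr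
      _ = 1 / γ := by rw [one_div, inv_pow]; field_simp; ring
  have hr0 : 0 < ENNReal.ofReal (1 / γ) := by rw [ENNReal.ofReal_pos]; positivity
  have hS : HasFPowerSeriesOnBall (fun y => P.sum (y - z)) P z (ENNReal.ofReal (1 / γ)) := by
    have := (P.hasFPowerSeriesOnBall (hr0.trans_le hrad)).comp_sub z
    rw [zero_add] at this
    exact this.mono hr0 hrad
  have hLf : AnalyticOnNhd ℝ (fun y => L (f y)) (Metric.eball z (ENNReal.ofReal (1 / γ))) :=
    fun w _ => (L.analyticAt (f w)).comp (hf w)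
  have hev : (fun y => P.sum (y - z)) =ᶠ[nhds z] fun y => L (f y) := by
    obtain ⟨p0, r, hp0⟩ := hf z
    have hb := Metric.eball_mem_nhds z hp0.r_pos
    filter_upwards [hb] with y hy
    have hy' : y - z ∈ Metric.eball (0 : EuclideanSpace ℝ (Fin n)) r := by
      simpa [edist_eq_enorm_sub] using hy
    have hs := (hp0.hasSum hy').mapL L
    rw [add_sub_cancel] at hs
    rw [← hs.tsum_eq, FormalMultilinearSeries.sum]
    congr 1
    funext k
    have := hp0.factorial_smul (y - z) k
    simp only [P, smul_apply,
      ContinuousLinearMap.compContinuousMultilinearMap_coe, Function.comp_apply, ← this,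
      map_nsmul]
    rw [← Nat.cast_smul_eq_nsmul ℝ, smul_smul, inv_mul_cancel₀ (by positivity), one_smul]
  have heq := hS.analyticOnNhd.eqOn_of_preconnected_of_eventuallyEq hLf
    (Metric.isConnected_eball hr0).isPreconnected (Metric.mem_eball_self hr0) hev
  have hfin' := (hS.congr heq).sub
    (((1 : EuclideanSpace ℝ (Fin n) →L[ℝ] EuclideanSpace ℝ (Fin n)).hasFPowerSeriesOnBall
      z).mono hr0 le_top)
  refine ⟨_, hfin', ?_⟩
  intro m hm
  have := hP m hm
  obtain ⟨k, rfl⟩ := Nat.exists_eq_add_of_le' hm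
  simpa using this

/-! ### The Newton sequence -/

/-- Double-exponential decay of the invariants along the Newton sequence. -/
lemma newton_iterate_control {n : ℕ}
    {f : EuclideanSpace ℝ (Fin n) → EuclideanSpace ℝ (Fin n)} (hf : Differentiable ℝ f)
    {z : EuclideanSpace ℝ (Fin n)} {a γ : ℝ}
    (ha : a ∈ Set.Icc (0 : ℝ) (1 - Real.sqrt 2 / 2)) (ha2 : 2 * a = psi a ^ 2)
    (hγ : 0 < γ) (hz : GammaControlled f z γ) (hα : smaleBeta f z * γ < a) (k : ℕ) :
    ∃ γ' : ℝ, 0 < γ' ∧ GammaControlled f ((newton f)^[k] z) γ' ∧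
      smaleBeta f ((newton f)^[k] z) ≤ ((1 : ℝ) / 2) ^ (2 ^ k - 1) * smaleBeta f z ∧
      smaleBeta f ((newton f)^[k] z) * γ' ≤ ((1 : ℝ) / 2) ^ (2 ^ k - 1) * a := by
  have hs2 : Real.sqrt 2 ^ 2 = 2 := Real.sq_sqrt (by norm_num)
  have hs0 : 1 ≤ Real.sqrt 2 := Real.one_le_sqrt.2 (by norm_num)
  have ha0 : 0 < a := by
    rcases ha.1.eq_or_lt with h | h
    · rw [← h] at ha2; norm_num [psi] at ha2
    · exact h
  have ha1 : a < 1 := by linarith [ha.2]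
  have hs : 0 < psi a := by
    have h1 : 0 ≤ psi a := by unfold psi; nlinarith [ha.2]
    rcases h1.eq_or_lt with h | h
    · rw [← h] at ha2; linarith
    · exact h
  have hs1 : psi a ≤ 1 := by unfold psi; nlinarith
  induction k with
  | zero => exact ⟨γ, hγ, hz, by simp, by simpa using hα.le⟩
  | succ k ih =>
    obtain ⟨γ', hγ', hc, hb, hab⟩ := ih
    rw [Function.iterate_succ_apply']
    set x := (newton f)^[k] z
    have hbx : 0 ≤ smaleBeta f x := norm_nonneg _
    have hbz : 0 ≤ smaleBeta f z := norm_nonneg _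
    set m := 2 ^ k - 1 with hm
    have hm2 : 2 ^ (k + 1) - 1 = m + (m + 1) := by
      have := Nat.one_le_two_pow (n := k)
      rw [pow_succ]; omega
    set c : ℝ := (1 / 2) ^ m with hc_def
    have hc0 : 0 < c := by positivity
    have hc1 : c ≤ 1 := pow_le_one₀ (by norm_num) (by norm_num)
    have hcc : ((1 : ℝ) / 2) ^ (2 ^ (k + 1) - 1) = c * (c / 2) := by
      rw [hm2, pow_add, pow_succ]; ring
    set u := smaleBeta f x * γ' with hu
    have hu0 : 0 ≤ u := by positivity
    have hua : u ≤ a := by nlinarith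
    have hψ : psi a ≤ psi u := by unfold psi; nlinarith
    have hψ0 : 0 < psi u := hs.trans_le hψ
    have hu1 : 0 < 1 - u := by linarith
    obtain ⟨hc', hb'⟩ := hc.step hf hγ' hu.symm (by linarith) hψ0
    have hus : u / psi u ≤ c * (psi a / 2) := by
      rw [div_le_iff₀ hψ0]
      calc u ≤ c * a := hab
        _ = c * (psi a / 2) * psi a := by linear_combination c / 2 * ha2
        _ ≤ _ := by gcongr
    have hus2 : u / psi u ≤ c / 2 := hus.trans (by nlinarith)
    have hus0 : 0 ≤ u / psi u := by positivity
    refine ⟨_, by positivity, hc', ?_, ?_⟩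
    · rw [hcc]
      calc smaleBeta f (newton f x) ≤ u * (1 - u) / psi u * smaleBeta f x := hb'
        _ = (u / psi u) * (1 - u) * smaleBeta f x := by ring
        _ ≤ (c / 2) * 1 * (c * smaleBeta f z) := by gcongr; linarith
        _ = _ := by ring
    · rw [hcc]
      calc smaleBeta f (newton f x) * (γ' / (psi u * (1 - u)))
          ≤ u * (1 - u) / psi u * smaleBeta f x * (γ' / (psi u * (1 - u))) := by gcongr
        _ = (u / psi u) * (smaleBeta f x * γ' / psi u) := by field_simp
        _ = (u / psi u) ^ 2 := by rw [← hu, sq]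
        _ ≤ (c * (psi a / 2)) ^ 2 := by gcongr
        _ = c * (c / 2) * a := by linear_combination -(c ^ 2 / 4) * ha2

/-- Smale's α-theorem in `ℝⁿ`: if `α(f,z) = β(f,z)γ(f,z) < α₀`, where `α₀` is
the root of `2u = ψ(u)²` in `[0, 1-√2/2]`, then the Newton sequence starting
at `z` is defined for all `k`, converges to a zero `ζ` of `f`, satisfies
`‖z_{k+1} - z_k‖ ≤ (1/2)^(2^k-1) β(f,z)`, and `‖ζ - z‖ ≤ σ β(f,z)` with
`σ = ∑_{k≥0} (1/2)^(2^k-1)`. -/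
theorem smale_alpha_theorem {n : ℕ}
    (f : EuclideanSpace ℝ (Fin n) → EuclideanSpace ℝ (Fin n))
    (hf : ∀ w, AnalyticAt ℝ f w)
    (z : EuclideanSpace ℝ (Fin n))
    (a : ℝ)
    (ha : a ∈ Set.Icc (0 : ℝ) (1 - Real.sqrt 2 / 2))
    (ha2 : 2 * a = psi a ^ 2)
    (hinv : IsUnit (fderiv ℝ f z))
    (hfin : BddAbove (Set.range fun k : ℕ => smaleTerm f z (k + 2)))
    (hα : smaleBeta f z * smaleGamma f z < a) :
    (∀ k : ℕ, IsUnit (fderiv ℝ f ((newton f)^[k] z))) ∧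
    ∃ ζ : EuclideanSpace ℝ (Fin n), f ζ = 0 ∧
      Filter.Tendsto (fun k : ℕ => (newton f)^[k] z) Filter.atTop (nhds ζ) ∧
      (∀ k : ℕ, ‖(newton f)^[k + 1] z - (newton f)^[k] z‖ ≤
        ((1 : ℝ) / 2) ^ (2 ^ k - 1) * smaleBeta f z) ∧
      ‖ζ - z‖ ≤ (∑' k : ℕ, ((1 : ℝ) / 2) ^ (2 ^ k - 1)) * smaleBeta f z := by
  have hdiff : Differentiable ℝ f := fun w => (hf w).differentiableAt
  have hβ0 : 0 ≤ smaleBeta f z := norm_nonneg _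
  have hγ0 : 0 ≤ smaleGamma f z := Real.iSup_nonneg fun k => by unfold smaleTerm; positivity
  -- Enlarging `γ` slightly makes it positive, so that the radius `1 / γ` is meaningful.
  obtain ⟨γ, hγ, hγα⟩ : ∃ γ, smaleGamma f z < γ ∧ smaleBeta f z * γ < a := by
    have hc : ContinuousAt (fun t : ℝ => smaleBeta f z * t) (smaleGamma f z) := by fun_prop
    have h1 : ∀ᶠ t in nhds (smaleGamma f z), smaleBeta f z * t < a :=
      hc.eventually (gt_mem_nhds hα)
    have h2 : ∀ᶠ t in nhdsWithin (smaleGamma f z) (Set.Ioi (smaleGamma f z)),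
        smaleGamma f z < t := self_mem_nhdsWithin
    exact (h2.and (h1.filter_mono nhdsWithin_le_nhds)).exists
  have hγp : 0 < γ := hγ0.trans_lt hγ
  have hctrl := newton_iterate_control hdiff ha ha2 hγp
    (gammaControlled_of_smaleGamma_le hf hinv hfin hγp hγ.le) hγα
  set x : ℕ → EuclideanSpace ℝ (Fin n) := fun k => (newton f)^[k] z with hx
  have hunit : ∀ k, IsUnit (fderiv ℝ f (x k)) := fun k => by
    obtain ⟨_, _, h, _⟩ := hctrl k
    exact h.1
  have hdiffx : ∀ k, x (k + 1) - x k = -dfInv f (x k) (f (x k)) := fun k => by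
    simp only [hx, Function.iterate_succ_apply']
    simp [newton]
  have hstep : ∀ k, ‖x (k + 1) - x k‖ ≤ ((1 : ℝ) / 2) ^ (2 ^ k - 1) * smaleBeta f z := fun k => by
    obtain ⟨_, _, _, h, _⟩ := hctrl k
    rw [hdiffx, norm_neg]
    exact h
  have hsum : Summable fun k : ℕ => ((1 : ℝ) / 2) ^ (2 ^ k - 1) := by
    refine Summable.of_nonneg_of_le (fun _ => by positivity) (fun k => ?_)
      (summable_geometric_of_lt_one (r := (1 : ℝ) / 2) (by norm_num) (by norm_num))
    exact pow_le_pow_of_le_one (by norm_num) (by norm_num)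
      (Nat.le_sub_one_of_lt Nat.lt_two_pow_self)
  have hsum' := hsum.mul_right (smaleBeta f z)
  have hdist : ∀ k, dist (x k) (x k.succ) ≤ ((1 : ℝ) / 2) ^ (2 ^ k - 1) * smaleBeta f z :=
    fun k => by rw [dist_comm, dist_eq_norm]; exact hstep k
  obtain ⟨ζ, hζ⟩ := cauchySeq_tendsto_of_complete (cauchySeq_of_dist_le_of_summable _ hdist hsum')
  refine ⟨hunit, ζ, ?_, hζ, hstep, ?_⟩
  · -- `f (x k) = Df(x k) (x k - x (k + 1))`, and the right-hand side tends to `Df(ζ) 0 = 0`.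
    have h1 : ∀ k, f (x k) = fderiv ℝ f (x k) (x k - x (k + 1)) := fun k => by
      rw [← neg_sub, hdiffx, neg_neg]
      have := Ring.mul_inverse_cancel _ (hunit k)
      exact (congrArg (fun T : EuclideanSpace ℝ (Fin n) →L[ℝ] EuclideanSpace ℝ (Fin n) =>
        T (f (x k))) this).symm
    have h2 : Filter.Tendsto (fun k => f (x k)) Filter.atTop (nhds (f ζ)) :=
      ((hf ζ).continuousAt.tendsto).comp hζ
    have h3 : Filter.Tendsto (fun k => fderiv ℝ f (x k)) Filter.atTop (nhds (fderiv ℝ f ζ)) :=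
      ((hf ζ).fderiv.continuousAt.tendsto).comp hζ
    have h4 : Filter.Tendsto (fun k => x k - x (k + 1)) Filter.atTop (nhds (ζ - ζ)) :=
      hζ.sub (hζ.comp (Filter.tendsto_add_atTop_nat 1))
    have h5 := ((isBoundedBilinearMap_apply (𝕜 := ℝ) (E := EuclideanSpace ℝ (Fin n))
      (F := EuclideanSpace ℝ (Fin n))).continuous.tendsto (fderiv ℝ f ζ, ζ - ζ)).comp
      (h3.prodMk_nhds h4)
    simp only [Function.comp_def, ← h1, sub_self, map_zero] at h5
    exact tendsto_nhds_unique h2 h5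
  · have := dist_le_tsum_of_dist_le_of_tendsto₀ _ hdist hsum' hζ
    rw [tsum_mul_right, dist_comm, dist_eq_norm] at this
    exact this
end
end
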